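/- Let P ⊆ ℤ^n_{≥0} be a polymatroid over [n] with rank function f satisfying f([n]) ≥ 2. Then for every i with 1 ≤ i < r_2(P) − 1, the coefficients of the exterior polynomial satisfy [y^{i+1}]X_P(y) − [y^i]X_P(y) ≤ ((f([n])+i−1)/(i+1)) · ([y^i]X_P(y) − [y^{i−1}]X_P(y)); in particular, if [y^i]X_P(y) − [y^{i−1}]X_P(y) ≤ 0, then [y^{i+1}]X_P(y) − [y^i]X_P(y) ≤ 0. -/

import Mathlib

open Finset Polynomial

/-- `f` is the rank function of a polymatroid over the ground set `[n]` (encoded as `Fin n`):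
normalization, monotonicity and submodularity. -/
def IsPolymatroidRank (n : ℕ) (f : Finset (Fin n) → ℕ) : Prop :=
  f ∅ = 0 ∧ (∀ I J : Finset (Fin n), I ⊆ J → f I ≤ f J) ∧
    ∀ I J : Finset (Fin n), f (I ∪ J) + f (I ∩ J) ≤ f I + f J

/-- The set of bases of the polymatroid `P ⊆ ℤ^n_{≥0}` with rank function `f`:
all nonnegative integer vectors `a` with `∑_{i ∈ I} a i ≤ f I` for every `I ⊆ [n]`
and `∑_{i ∈ [n]} a i = f [n]`.  (Every such vector has entries `≤ f [n]`, whence the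
bounding box used to produce a `Finset`.) -/
def polyBases (n : ℕ) (f : Finset (Fin n) → ℕ) : Finset (Fin n → ℤ) :=
  ((Finset.univ : Finset (Fin n → Fin (f Finset.univ + 1))).image
      (fun a i => ((a i : ℕ) : ℤ))).filter
    fun a => (∀ i, 0 ≤ a i) ∧ (∀ I : Finset (Fin n), ∑ i ∈ I, a i ≤ (f I : ℤ)) ∧
      ∑ i, a i = (f Finset.univ : ℤ)

/-- The externally active indices of a basis `a`: those `i` such that
`a + e_i - e_j ∉ P` for every `j < i`. -/
def extAct (n : ℕ) (f : Finset (Fin n) → ℕ) (a : Fin n → ℤ) : Finset (Fin n) :=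
  Finset.univ.filter fun i => ∀ j, j < i →
    (fun t => a t + (if t = i then 1 else 0) - (if t = j then 1 else 0)) ∉ polyBases n f

/-- The internally active indices of a basis `a`: those `i` such that
`a - e_i + e_j ∉ P` for every `j < i`. -/
def intAct (n : ℕ) (f : Finset (Fin n) → ℕ) (a : Fin n → ℤ) : Finset (Fin n) :=
  Finset.univ.filter fun i => ∀ j, j < i →
    (fun t => a t - (if t = i then 1 else 0) + (if t = j then 1 else 0)) ∉ polyBases n f

/-- The exterior polynomial `X_P(y) = ∑_{a ∈ P} y^(n - |Ext(a)|)`. -/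
noncomputable def exteriorPoly (n : ℕ) (f : Finset (Fin n) → ℕ) : Polynomial ℤ :=
  ∑ a ∈ polyBases n f, X ^ (n - (extAct n f a).card)

/-- The interior polynomial `I_P(x) = ∑_{a ∈ P} x^(n - |Int(a)|)`. -/
noncomputable def interiorPoly (n : ℕ) (f : Finset (Fin n) → ℕ) : Polynomial ℤ :=
  ∑ a ∈ polyBases n f, X ^ (n - (intAct n f a).card)

/-- `r_k(P) = min { n - |F| : F ⊆ [n], f F ≤ f [n] - k }` (junk value `0` if no such `F`). -/
noncomputable def rk (n : ℕ) (f : Finset (Fin n) → ℕ) (k : ℕ) : ℕ :=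
  sInf {m | ∃ F : Finset (Fin n), (f F : ℤ) ≤ (f Finset.univ : ℤ) - k ∧ m = n - F.card}

/-- `r'_k(P) = min { |F| : F ⊆ [n], ∑_{i ∈ F} f {i} - f F ≥ k }` (junk value `0` if no such `F`). -/
noncomputable def rk' (n : ℕ) (f : Finset (Fin n) → ℕ) (k : ℕ) : ℕ :=
  sInf {m | ∃ F : Finset (Fin n), (k : ℤ) ≤ (∑ i ∈ F, (f {i} : ℤ)) - (f F : ℤ) ∧ m = F.card}

/-- `H_j(P)`: the flats `H` (i.e. `f (H ∪ {e}) > f H` for all `e ∉ H`) with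
`f H = f [n] - 1` and `n - |H| = j`. -/
def Hset (n : ℕ) (f : Finset (Fin n) → ℕ) (j : ℕ) : Finset (Finset (Fin n)) :=
  Finset.univ.filter fun H =>
    (∀ e, e ∉ H → f H < f (insert e H)) ∧ (f H : ℤ) = (f Finset.univ : ℤ) - 1 ∧
      n - H.card = j

/-- `C_j(P)`: the sets `C` with `|C| = j`, `∑_{i ∈ C} f {i} - f C = 1` and
`∑_{i ∈ C \ {j'}} f {i} = f (C \ {j'})` for every `j' ∈ C`. -/
def Cset (n : ℕ) (f : Finset (Fin n) → ℕ) (j : ℕ) : Finset (Finset (Fin n)) :=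
  Finset.univ.filter fun C => C.card = j ∧
    (∑ i ∈ C, (f {i} : ℤ)) - (f C : ℤ) = 1 ∧
    ∀ j' ∈ C, (∑ i ∈ C.erase j', (f {i} : ℤ)) = (f (C.erase j') : ℤ)

/-- The dual rank function `f*(I) = f([n] \ I) - f([n]) + ∑_{i ∈ I} f {i}`
(the subtraction is exact for a polymatroid rank function). -/
def fdual (n : ℕ) (f : Finset (Fin n) → ℕ) : Finset (Fin n) → ℕ :=
  fun I => f (Finset.univ \ I) + (∑ i ∈ I, f {i}) - f Finset.univ

/-!
Write `y` for the variable. Let `c 0, ..., c (n - 1)` be independent random variables with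
`Prob (c i ≥ k) = (1 - y) ^ k`. The cones at the bases `a`, spanned by the externally active
directions, partition the vectors that dominate a basis, and the cone at `a` has probability
`(1 - y) ^ d * y ^ (n - #Ext a)` for `d = f univ`. So `(1 - y) ^ d * X_P` is the probability that
`c` dominates a basis. By Edmonds' min-max theorem, this fails up to order `y ^ r₂` exactly when
`c` vanishes outside a hyperplane, and the hyperplane is then unique. Hence
`(1 - y) ^ d * X_P = 1 - ∑ H, y ^ (n - #H)` modulo `y ^ r₂`, summed over the hyperplanes `H`, and
the coefficients at `y ^ j` with `1 ≤ j < r₂` are nonpositive. For `Δ = (1 - y) * X_P` this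
applies to `(1 - y) ^ (d - 1) * Δ`, whose derivative is
`(1 - y) ^ (d - 2) * ((1 - y) * Δ' - (d - 1) * Δ)`. Multiplication by `1 / (1 - y)` takes partial
sums of the coefficients, which preserves nonpositivity, so that the low coefficients of
`(1 - y) * Δ' - (d - 1) * Δ` are nonpositive: these are the inequalities to be proved.
-/

section CoeffSigns

variable {R : Type*} [CommRing R]

lemma coeff_one_sub_X_mul_succ (p : R[X]) (k : ℕ) :
    ((1 - X) * p).coeff (k + 1) = p.coeff (k + 1) - p.coeff k := by
  rw [sub_mul, one_mul, coeff_sub, coeff_X_mul]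

lemma derivative_one_sub_X_pow_succ_mul (p : R[X]) (m : ℕ) :
    derivative ((1 - X) ^ (m + 1) * p) =
      (1 - X) ^ m * ((1 - X) * derivative p - (m + 1 : R[X]) * p) := by
  simp only [derivative_mul, derivative_pow, derivative_sub, derivative_one, derivative_X,
    Nat.cast_add, Nat.cast_one, C_add, C_eq_natCast, C_1, add_tsub_cancel_right]
  ring

variable [PartialOrder R] [IsOrderedRing R]

lemma coeff_nonpos_of_one_sub_X_mul {p : R[X]} {i : ℕ}
    (h : ∀ j ≤ i, ((1 - X) * p).coeff j ≤ 0) : ∀ j ≤ i, p.coeff j ≤ 0 := by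
  intro j hj
  induction j with
  | zero => simpa [sub_mul] using h 0 hj
  | succ j ih =>
    have hstep := h (j + 1) hj
    rw [coeff_one_sub_X_mul_succ, sub_nonpos] at hstep
    exact hstep.trans (ih (by lia))

lemma coeff_nonpos_of_one_sub_X_pow_mul {p : R[X]} {m i : ℕ}
    (h : ∀ j ≤ i, ((1 - X) ^ m * p).coeff j ≤ 0) : ∀ j ≤ i, p.coeff j ≤ 0 := by
  induction m with
  | zero => simpa using h
  | succ m ih =>
    simp only [pow_succ', mul_assoc] at h
    exact ih (coeff_nonpos_of_one_sub_X_mul h)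

/-- If `G = (1 - X) ^ (m + 1) * p`, then `G' = (1 - X) ^ m * ((1 - X) * p' - (m + 1) * p)`, and the
coefficients of the last factor are the differences to be compared. -/
lemma succ_mul_coeff_succ_le {p : R[X]} {m i : ℕ}
    (h : ∀ j ≤ i, ((1 - X) ^ (m + 1) * p).coeff (j + 1) ≤ 0) :
    (i + 1 : R) * p.coeff (i + 1) ≤ (m + 1 + i : R) * p.coeff i := by
  have hderiv : ∀ j ≤ i, ((1 - X) ^ m *
      ((1 - X) * derivative p - (m + 1 : R[X]) * p)).coeff j ≤ 0 := by
    intro j hj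
    rw [← derivative_one_sub_X_pow_succ_mul, coeff_derivative]
    exact mul_nonpos_of_nonpos_of_nonneg (h j hj)
      (add_nonneg j.cast_nonneg zero_le_one)
  have hi := coeff_nonpos_of_one_sub_X_pow_mul hderiv i le_rfl
  have hcast : (m + 1 : R[X]) = C (m + 1 : R) := by simp
  rw [hcast, coeff_sub, coeff_C_mul] at hi
  cases i with
  | zero =>
    simpa [sub_mul, coeff_derivative] using hi
  | succ i =>
    rw [coeff_one_sub_X_mul_succ, coeff_derivative, coeff_derivative] at hi
    push_cast at hi ⊢
    rw [← sub_nonpos]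
    convert hi using 1
    ring

end CoeffSigns

section GeometricWeight

variable {R : Type*} [CommRing R]

/-- The probability of the value `k ≥ 0` under the geometric distribution `k ↦ y * (1 - y) ^ k`,
where all values `≥ D` are collected at `D`. As a formal expression it makes sense for every `y` in
a commutative ring. -/
def geomWeight (y : R) (D k : ℤ) : R := (1 - y) ^ k.toNat * if k = D then 1 else y

lemma geomWeight_self (y : R) (D : ℤ) : geomWeight y D D = (1 - y) ^ D.toNat := by
  rw [geomWeight, if_pos rfl, mul_one]

lemma geomWeight_of_lt (y : R) {D k : ℤ} (h : k < D) :
    geomWeight y D k = (1 - y) ^ k.toNat * y := by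
  rw [geomWeight, if_neg h.ne]

lemma sum_geomWeight_Icc (y : R) {m D : ℤ} (hm : 0 ≤ m) (hD : m ≤ D) :
    ∑ k ∈ Icc m D, geomWeight y D k = (1 - y) ^ m.toNat := by
  obtain ⟨t, rfl⟩ := Int.le.dest hD
  clear hD
  induction t generalizing m with
  | zero => simp [geomWeight_self]
  | succ t ih =>
    have htail : ∑ k ∈ Icc (m + 1) (m + (t + 1 : ℕ)), geomWeight y (m + (t + 1 : ℕ)) k =
        (1 - y) ^ (m + 1).toNat := by
      have := ih (m := m + 1) (by lia)
      rwa [add_assoc, add_comm (1 : ℤ), ← Nat.cast_succ] at this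
    have hpow : (m + 1).toNat = m.toNat + 1 := by lia
    rw [← insert_Icc_add_one_left_eq_Icc (by lia), sum_insert (by simp), htail,
      geomWeight_of_lt y (by lia), hpow, pow_succ]
    ring

variable {ι : Type*} [Fintype ι] [DecidableEq ι]

/-- The cone with apex `a` spanned by the coordinate directions in `S`, cut off at height `D`. -/
noncomputable def truncCone (D : ℤ) (a : ι → ℤ) (S : Finset ι) : Finset (ι → ℤ) :=
  Fintype.piFinset fun i => if i ∈ S then Icc (a i) D else {a i}

lemma mem_truncCone {D : ℤ} {a c : ι → ℤ} {S : Finset ι} :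
    c ∈ truncCone D a S ↔ (∀ i ∈ S, a i ≤ c i ∧ c i ≤ D) ∧ ∀ i ∉ S, c i = a i := by
  simp only [truncCone, Fintype.mem_piFinset]
  constructor
  · exact fun h => ⟨fun i hi => by simpa [hi] using h i, fun i hi => by simpa [hi] using h i⟩
  · rintro ⟨hS, hSc⟩ i
    by_cases hi : i ∈ S
    · simpa [hi] using hS i hi
    · simpa [hi] using hSc i hi

lemma le_of_mem_truncCone {D : ℤ} {a c : ι → ℤ} {S : Finset ι} (hc : c ∈ truncCone D a S) (i : ι) :
    a i ≤ c i := by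
  rw [mem_truncCone] at hc
  by_cases hi : i ∈ S
  · exact (hc.1 i hi).1
  · exact (hc.2 i hi).ge

lemma truncCone_subset_truncCone_zero_univ {D : ℤ} {a : ι → ℤ} (ha : 0 ≤ a) (haD : ∀ i, a i ≤ D)
    (S : Finset ι) : truncCone D a S ⊆ truncCone D 0 univ := by
  intro c hc
  refine mem_truncCone.2 ⟨fun i _ => ⟨(ha i).trans (le_of_mem_truncCone hc i), ?_⟩, by simp⟩
  rw [mem_truncCone] at hc
  by_cases hi : i ∈ S
  · exact (hc.1 i hi).2
  · exact (hc.2 i hi).trans_le (haD i)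

lemma filter_eq_zero_off_eq_truncCone {D : ℤ} (hD : 0 ≤ D) (S : Finset ι)
    [DecidablePred fun c : ι → ℤ => ∀ i ∉ S, c i = 0] :
    {c ∈ truncCone D (0 : ι → ℤ) univ | ∀ i ∉ S, c i = 0} = truncCone D 0 S := by
  ext c
  rw [mem_filter]
  constructor
  · rintro ⟨hc, hcS⟩
    exact mem_truncCone.2 ⟨fun i _ => (mem_truncCone.1 hc).1 i (mem_univ i), hcS⟩
  · exact fun hc => ⟨truncCone_subset_truncCone_zero_univ le_rfl (fun _ => hD) S hc,
      (mem_truncCone.1 hc).2⟩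

/-- The weight of a vector whose coordinates are independent with law `geomWeight`. -/
def boxWeight (y : R) (D : ℤ) (c : ι → ℤ) : R := ∏ i, geomWeight y D (c i)

lemma sum_boxWeight_truncCone (y : R) {D : ℤ} {a : ι → ℤ} (ha : 0 ≤ a) (haD : ∀ i, a i < D)
    (S : Finset ι) :
    ∑ c ∈ truncCone D a S, boxWeight y D c = (1 - y) ^ (∑ i, (a i).toNat) * y ^ #Sᶜ := by
  have hcoord : ∀ i, ∑ k ∈ (if i ∈ S then Icc (a i) D else {a i}), geomWeight y D k =
      (1 - y) ^ (a i).toNat * if i ∈ S then 1 else y := by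
    intro i
    split_ifs
    · rw [sum_geomWeight_Icc y (ha i) (haD i).le, mul_one]
    · rw [sum_singleton, geomWeight_of_lt y (haD i)]
  simp only [truncCone, boxWeight]
  rw [← prod_univ_sum, prod_congr rfl fun i _ => hcoord i, prod_mul_distrib, prod_pow_eq_pow_sum,
    prod_ite, prod_const_one, one_mul, prod_const, filter_notMem_eq_sdiff, compl_eq_univ_sdiff]

lemma pow_card_ne_dvd_boxWeight (y : R) (D : ℤ) (c : ι → ℤ) :
    y ^ #({i | c i = D} : Finset ι)ᶜ ∣ boxWeight y D c := by
  simp only [boxWeight, geomWeight]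
  rw [prod_mul_distrib, prod_ite, prod_const_one, one_mul, prod_const, compl_filter]
  exact dvd_mul_left _ _

end GeometricWeight

section IndependentVectors

variable {n : ℕ} {f : Finset (Fin n) → ℕ} {a b : Fin n → ℤ}

/-- Independent vectors of the polymatroid with rank function `f`: the nonnegative integer vectors
obeying all rank constraints, but with any coordinate sum. -/
def IsIndepVector (f : Finset (Fin n) → ℕ) (a : Fin n → ℤ) : Prop :=
  0 ≤ a ∧ ∀ I : Finset (Fin n), ∑ t ∈ I, a t ≤ f I

/-- The set `I` is tight for `a` if its rank constraint holds with equality. -/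
def IsTight (f : Finset (Fin n) → ℕ) (a : Fin n → ℤ) (I : Finset (Fin n)) : Prop :=
  ∑ t ∈ I, a t = f I

lemma sum_add_single (a : Fin n → ℤ) (i : Fin n) (I : Finset (Fin n)) :
    ∑ t ∈ I, (a + Pi.single i 1 : Fin n → ℤ) t = ∑ t ∈ I, a t + if i ∈ I then 1 else 0 := by
  simp [sum_add_distrib]

lemma sum_add_single_sub_single (a : Fin n → ℤ) (i j : Fin n) (I : Finset (Fin n)) :
    ∑ t ∈ I, (a + Pi.single i 1 - Pi.single j 1 : Fin n → ℤ) t =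
      ∑ t ∈ I, a t + (if i ∈ I then 1 else 0) - if j ∈ I then 1 else 0 := by
  simp [sum_add_distrib, sum_sub_distrib]

lemma IsIndepVector.add_single (ha : IsIndepVector f a) {i : Fin n}
    (hi : ∀ I, i ∈ I → ¬ IsTight f a I) : IsIndepVector f (a + Pi.single i 1) := by
  refine ⟨add_nonneg ha.1 (Pi.single_nonneg.2 zero_le_one), fun I => ?_⟩
  rw [sum_add_single]
  split_ifs with hiI
  · exact (ha.2 I).lt_of_ne (hi I hiI)
  · simpa using ha.2 I

lemma add_single_le {c : Fin n → ℤ} (hac : a ≤ c) {i : Fin n} (hi : a i < c i) :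
    a + Pi.single i 1 ≤ c := by
  intro t
  obtain rfl | hti := eq_or_ne t i
  · simpa using hi
  · simpa [hti] using hac t

lemma exists_maximal_isIndepVector_le (f : Finset (Fin n) → ℕ) {c : Fin n → ℤ} (hc : 0 ≤ c) :
    ∃ a, Maximal (fun a => IsIndepVector f a ∧ a ≤ c) a := by
  refine Set.Finite.exists_maximal (s := {a | IsIndepVector f a ∧ a ≤ c})
    ((Set.finite_Icc 0 c).subset fun a ha => ⟨ha.1.1, ha.2⟩) ⟨0, ⟨le_rfl, fun I => ?_⟩, hc⟩
  simp

namespace IsPolymatroidRank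

lemma map_empty (hf : IsPolymatroidRank n f) : f ∅ = 0 := hf.1

lemma mono (hf : IsPolymatroidRank n f) {I J : Finset (Fin n)} (h : I ⊆ J) : f I ≤ f J :=
  hf.2.1 I J h

lemma submodular (hf : IsPolymatroidRank n f) (I J : Finset (Fin n)) :
    f (I ∪ J) + f (I ∩ J) ≤ f I + f J :=
  hf.2.2 I J

lemma le_rank_univ (hf : IsPolymatroidRank n f) (ha : IsIndepVector f a) (i : Fin n) :
    a i ≤ f univ :=
  calc a i = ∑ t ∈ {i}, a t := (sum_singleton a i).symm
    _ ≤ f {i} := ha.2 {i}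
    _ ≤ f univ := by exact_mod_cast hf.mono (subset_univ _)

lemma mem_polyBases (hf : IsPolymatroidRank n f) :
    a ∈ polyBases n f ↔ IsIndepVector f a ∧ IsTight f a univ := by
  simp only [polyBases, mem_filter]
  constructor
  · rintro ⟨-, h0, hle, hsum⟩
    exact ⟨⟨h0, hle⟩, hsum⟩
  · rintro ⟨ha, hsum⟩
    refine ⟨mem_image.2 ⟨fun i => ⟨(a i).toNat, ?_⟩, mem_univ _, ?_⟩, ha.1, ha.2, hsum⟩
    · have := hf.le_rank_univ ha i
      lia
    · exact funext fun i => Int.toNat_of_nonneg (ha.1 i)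

lemma isTight_union_inter (hf : IsPolymatroidRank n f) (ha : IsIndepVector f a)
    {I J : Finset (Fin n)} (hI : IsTight f a I) (hJ : IsTight f a J) :
    IsTight f a (I ∪ J) ∧ IsTight f a (I ∩ J) := by
  unfold IsTight at *
  have hsum := sum_union_inter (s₁ := I) (s₂ := J) (f := a)
  have hunion := ha.2 (I ∪ J)
  have hinter := ha.2 (I ∩ J)
  have hsub := hf.submodular I J
  constructor <;> lia

lemma exists_isGreatest_isTight (hf : IsPolymatroidRank n f) (ha : IsIndepVector f a) :
    ∃ U, IsGreatest {I | IsTight f a I} U := by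
  classical
  refine ⟨(univ.filter (IsTight f a)).sup id, ?_, fun I hI => le_sup (f := id) (by simpa using hI)⟩
  refine sup_induction (p := IsTight f a) ?_ ?_ (by simp)
  · simp [IsTight, hf.map_empty]
  · exact fun I hI J hJ => (hf.isTight_union_inter ha hI hJ).1

lemma exists_isLeast_isTight_mem (hf : IsPolymatroidRank n f) (ha : a ∈ polyBases n f)
    (i : Fin n) : ∃ U, IsLeast {I | i ∈ I ∧ IsTight f a I} U := by
  classical
  rw [hf.mem_polyBases] at ha
  refine ⟨(univ.filter fun I => i ∈ I ∧ IsTight f a I).inf id, ?_,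
    fun I hI => inf_le (f := id) (by simpa using hI)⟩
  refine inf_induction (p := fun I => i ∈ I ∧ IsTight f a I) ⟨mem_univ i, ha.2⟩ ?_ (by simp)
  exact fun I hI J hJ => ⟨mem_inter.2 ⟨hI.1, hJ.1⟩, (hf.isTight_union_inter ha.1 hI.2 hJ.2).2⟩

lemma add_single_sub_single_mem_polyBases (hf : IsPolymatroidRank n f) (ha : a ∈ polyBases n f)
    {i j : Fin n} (hj : 0 < a j) (hij : ∀ I, i ∈ I → IsTight f a I → j ∈ I) :
    a + Pi.single i 1 - Pi.single j 1 ∈ polyBases n f := by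
  rw [hf.mem_polyBases] at ha ⊢
  refine ⟨⟨fun t => ?_, fun I => ?_⟩, ?_⟩
  · have := ha.1.1 t
    simp only [Pi.zero_apply, Pi.sub_apply, Pi.add_apply, Pi.single_apply] at this ⊢
    split_ifs <;> subst_vars <;> lia
  · have hle := ha.1.2 I
    have hlt : i ∈ I → j ∉ I → ∑ t ∈ I, a t < f I := fun hi hjI =>
      hle.lt_of_ne fun h => hjI (hij I hi h)
    rw [sum_add_single_sub_single]
    split_ifs <;> lia
  · rw [IsTight, sum_add_single_sub_single, if_pos (mem_univ i), if_pos (mem_univ j),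
      add_sub_cancel_right]
    exact ha.2

lemma exists_exchange (hf : IsPolymatroidRank n f) (ha : a ∈ polyBases n f)
    (hb : b ∈ polyBases n f) {i : Fin n} (hi : a i < b i) :
    ∃ j, b j < a j ∧ a + Pi.single i 1 - Pi.single j 1 ∈ polyBases n f := by
  obtain ⟨U, ⟨hiU, hU⟩, hleast⟩ := hf.exists_isLeast_isTight_mem ha i
  rw [hf.mem_polyBases] at hb
  obtain ⟨j, hjU, hj⟩ : ∃ j ∈ U, b j < a j := by
    by_contra! hle
    exact ((sum_lt_sum hle ⟨i, hiU, hi⟩).trans_le (hb.1.2 U)).ne hU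
  exact ⟨j, hj, hf.add_single_sub_single_mem_polyBases ha ((hb.1.1 j).trans_lt hj)
    fun I hiI hI => hleast ⟨hiI, hI⟩ hjU⟩

end IsPolymatroidRank

/-- The vector `c` spans if it dominates some basis coordinatewise, generalizing the spanning sets
of a matroid. -/
def Spans (f : Finset (Fin n) → ℕ) (c : Fin n → ℤ) : Prop := ∃ a ∈ polyBases n f, a ≤ c

/-- Edmonds' min-max theorem: a maximal independent vector below `c` agrees with `c` outside its
greatest tight set. -/
lemma IsPolymatroidRank.spans_iff (hf : IsPolymatroidRank n f) {c : Fin n → ℤ} (hc : 0 ≤ c) :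
    Spans f c ↔ ∀ I : Finset (Fin n), (f univ : ℤ) ≤ f I + ∑ i ∈ Iᶜ, c i := by
  constructor
  · rintro ⟨a, ha, hac⟩ I
    rw [hf.mem_polyBases] at ha
    rw [← ha.2, ← sum_add_sum_compl I]
    exact add_le_add (ha.1.2 I) (sum_le_sum fun i _ => hac i)
  · intro h
    obtain ⟨a, ⟨ha, hac⟩, hmax⟩ := exists_maximal_isIndepVector_le f hc
    obtain ⟨U, hU, hgreatest⟩ := hf.exists_isGreatest_isTight ha
    have heq : ∀ i ∈ Uᶜ, a i = c i := by
      intro i hiU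
      rw [mem_compl] at hiU
      by_contra hne
      have hle := hmax ⟨ha.add_single fun I hiI hI => hiU (hgreatest hI hiI),
        add_single_le hac ((hac i).lt_of_ne hne)⟩ (by simp) i
      simp at hle
    refine ⟨a, hf.mem_polyBases.2 ⟨ha, (ha.2 univ).antisymm ?_⟩, hac⟩
    rw [← sum_add_sum_compl U, sum_congr rfl heq, hU]
    exact h U

end IndependentVectors

section ConePartition

variable {n : ℕ} {f : Finset (Fin n) → ℕ} {a b c : Fin n → ℤ} {D : ℤ}

lemma mem_extAct {i : Fin n} :
    i ∈ extAct n f a ↔ ∀ j < i, a + Pi.single i 1 - Pi.single j 1 ∉ polyBases n f := by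
  have hfun : ∀ j, (fun t => a t + (if t = i then 1 else 0) - (if t = j then 1 else 0)) =
      a + Pi.single i 1 - Pi.single j 1 := by
    intro j
    ext t
    simp only [Pi.sub_apply, Pi.add_apply, Pi.single_apply]
  simp only [extAct, mem_filter_univ, hfun]

/-- The truncated cone at the basis `a` in the directions of its externally active indices. These
cones partition the spanning vectors. -/
noncomputable def extCone (f : Finset (Fin n) → ℕ) (D : ℤ) (a : Fin n → ℤ) : Finset (Fin n → ℤ) :=
  truncCone D a (extAct n f a)

/-- Among the bases below `c`, the one with the largest moment `∑ t, t * a t` has `c` in its cone: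
an exchange towards a larger index would increase the moment. -/
lemma exists_mem_extCone_of_spans (hcD : ∀ i, c i ≤ D) (hc : Spans f c) :
    ∃ a ∈ polyBases n f, c ∈ extCone f D a := by
  classical
  obtain ⟨a₀, ha₀, ha₀c⟩ := hc
  obtain ⟨a, ha, hmax⟩ := exists_max_image ((polyBases n f).filter (· ≤ c))
    (fun a => ∑ t : Fin n, (t : ℤ) * a t) ⟨a₀, mem_filter.2 ⟨ha₀, ha₀c⟩⟩
  rw [mem_filter] at ha
  refine ⟨a, ha.1, mem_truncCone.2 ⟨fun i _ => ⟨ha.2 i, hcD i⟩, fun i hi => ?_⟩⟩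
  by_contra hne
  rw [mem_extAct] at hi
  push Not at hi
  obtain ⟨j, hji, hbasis⟩ := hi
  have hle : a + Pi.single i 1 - Pi.single j 1 ≤ c :=
    (sub_le_self _ (Pi.single_nonneg.2 zero_le_one)).trans
      (add_single_le ha.2 ((ha.2 i).lt_of_ne' hne))
  have hmoment : ∑ t : Fin n, (t : ℤ) * (a + Pi.single i 1 - Pi.single j 1 : Fin n → ℤ) t =
      ∑ t : Fin n, (t : ℤ) * a t + i - j := by
    simp [mul_sub, mul_add, sum_sub_distrib, sum_add_distrib, Pi.single_apply]
  have := hmax _ (mem_filter.2 ⟨hbasis, hle⟩)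
  rw [hmoment] at this
  have : (j : ℤ) < i := by exact_mod_cast hji
  lia

namespace IsPolymatroidRank

lemma exists_gt_and_lt_of_mem_extCone (hf : IsPolymatroidRank n f) (ha : a ∈ polyBases n f)
    (hb : b ∈ polyBases n f) (hac : c ∈ extCone f D a) (hbc : b ≤ c) {i : Fin n} (hi : a i < b i) :
    ∃ j > i, b j < a j := by
  obtain ⟨j, hj, hbasis⟩ := hf.exists_exchange ha hb hi
  have hactive : i ∈ extAct n f a := by
    by_contra hnot
    exact (hi.trans_le (hbc i)).ne' ((mem_truncCone.1 hac).2 i hnot)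
  have hij : i ≤ j := not_lt.1 fun hji => mem_extAct.1 hactive j hji hbasis
  exact ⟨j, hij.lt_of_ne (by rintro rfl; exact hi.asymm hj), hj⟩

lemma eq_of_mem_extCone (hf : IsPolymatroidRank n f) (ha : a ∈ polyBases n f)
    (hb : b ∈ polyBases n f) (hac : c ∈ extCone f D a) (hbc : c ∈ extCone f D b) : a = b := by
  by_contra hne
  obtain ⟨i₀, hi₀⟩ := Function.ne_iff.1 hne
  obtain ⟨i, hi, hmax⟩ := exists_max_image (univ.filter fun i => a i ≠ b i) id
    ⟨i₀, by simpa using hi₀⟩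
  simp only [mem_filter_univ, id] at hi hmax
  obtain h | h := hi.lt_or_gt
  · obtain ⟨j, hij, hj⟩ :=
      hf.exists_gt_and_lt_of_mem_extCone ha hb hac (le_of_mem_truncCone hbc) h
    exact (hmax j hj.ne').not_gt hij
  · obtain ⟨j, hij, hj⟩ :=
      hf.exists_gt_and_lt_of_mem_extCone hb ha hbc (le_of_mem_truncCone hac) h
    exact (hmax j hj.ne).not_gt hij

open scoped Classical in
lemma filter_spans_eq_biUnion_extCone (hf : IsPolymatroidRank n f) (hD : (f univ : ℤ) ≤ D) :
    (truncCone D 0 univ).filter (Spans f) = (polyBases n f).biUnion (extCone f D) := by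
  ext c
  simp only [mem_filter, mem_biUnion]
  constructor
  · rintro ⟨hc, hspans⟩
    exact exists_mem_extCone_of_spans (fun i => ((mem_truncCone.1 hc).1 i (mem_univ i)).2) hspans
  · rintro ⟨a, ha, hc⟩
    have hindep := (hf.mem_polyBases.1 ha).1
    exact ⟨truncCone_subset_truncCone_zero_univ hindep.1
      (fun i => (hf.le_rank_univ hindep i).trans hD) _ hc, a, ha, le_of_mem_truncCone hc⟩

lemma sum_boxWeight_extCone {R : Type*} [CommRing R] (y : R) (hf : IsPolymatroidRank n f)
    (hD : (f univ : ℤ) < D) (ha : a ∈ polyBases n f) :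
    ∑ c ∈ extCone f D a, boxWeight y D c = (1 - y) ^ f univ * y ^ (n - #(extAct n f a)) := by
  obtain ⟨hindep, htight⟩ := hf.mem_polyBases.1 ha
  have hsum : ∑ i, (a i).toNat = f univ := by
    zify
    rw [← htight]
    exact sum_congr rfl fun i _ => Int.toNat_of_nonneg (hindep.1 i)
  rw [extCone, sum_boxWeight_truncCone y hindep.1 fun i => (hf.le_rank_univ hindep i).trans_lt hD,
    hsum, card_compl, Fintype.card_fin]

open scoped Classical in
lemma one_sub_X_pow_mul_exteriorPoly (hf : IsPolymatroidRank n f) (hD : (f univ : ℤ) < D) :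
    (1 - X) ^ f univ * exteriorPoly n f =
      ∑ c ∈ truncCone D 0 univ with Spans f c, boxWeight X D c := by
  have hdisj : (polyBases n f : Set (Fin n → ℤ)).PairwiseDisjoint (extCone f D) :=
    fun a ha b hb hab => disjoint_left.2 fun c hac hbc => hab (hf.eq_of_mem_extCone ha hb hac hbc)
  rw [hf.filter_spans_eq_biUnion_extCone hD.le, sum_biUnion hdisj, exteriorPoly, mul_sum]
  exact sum_congr rfl fun a ha => (hf.sum_boxWeight_extCone X hD ha).symm

end IsPolymatroidRank

end ConePartition

section Hyperplanes

variable {n : ℕ} {f : Finset (Fin n) → ℕ} {D : ℤ} {c : Fin n → ℤ}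

/-- The hyperplanes: flats whose rank is one less than the full rank. -/
def hyperplanes (n : ℕ) (f : Finset (Fin n) → ℕ) : Finset (Finset (Fin n)) :=
  univ.filter fun H => (∀ e, e ∉ H → f H < f (insert e H)) ∧ f H + 1 = f univ

lemma mem_hyperplanes {H : Finset (Fin n)} : H ∈ hyperplanes n f ↔
    (∀ e, e ∉ H → f H < f (insert e H)) ∧ f H + 1 = f univ := by
  simp [hyperplanes]

lemma Hset_eq_filter_hyperplanes (n : ℕ) (f : Finset (Fin n) → ℕ) (j : ℕ) :
    Hset n f j = (hyperplanes n f).filter fun H => n - #H = j := by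
  ext H
  have hrank : (f H : ℤ) = f univ - 1 ↔ f H + 1 = f univ := by lia
  simp only [Hset, mem_filter, mem_univ, true_and, mem_hyperplanes, hrank, and_assoc]

namespace IsPolymatroidRank

lemma exists_hyperplane_superset (hf : IsPolymatroidRank n f) {I : Finset (Fin n)}
    (hI : f I + 1 = f univ) : ∃ H ∈ hyperplanes n f, I ⊆ H := by
  obtain ⟨H, hIH, hH⟩ := exists_le_maximal (univ.filter fun J => f J + 1 = f univ)
    ((mem_filter_univ I).2 hI)
  simp only [mem_filter_univ] at hH
  refine ⟨H, mem_hyperplanes.2 ⟨fun e he => ?_, hH.prop⟩, hIH⟩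
  refine (hf.mono (subset_insert e H)).lt_of_ne fun heq => he ?_
  exact hH.le_of_ge (heq ▸ hH.prop) (subset_insert e H) (mem_insert_self e H)

lemma hyperplane_subset (hf : IsPolymatroidRank n f) {H K : Finset (Fin n)}
    (hH : H ∈ hyperplanes n f) (hK : K ∈ hyperplanes n f) (hHK : f univ ≤ f (H ∩ K) + 1) :
    K ⊆ H := by
  rw [mem_hyperplanes] at hH hK
  intro e he
  by_contra heH
  have hflat := hH.1 e heH
  have hsub := hf.submodular H K
  have hmono : f (insert e H) ≤ f (H ∪ K) :=
    hf.mono (insert_subset (mem_union_right H he) subset_union_left)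
  lia

lemma not_spans_of_eq_zero_off_hyperplane (hf : IsPolymatroidRank n f) {H : Finset (Fin n)}
    (hH : H ∈ hyperplanes n f) (hc : 0 ≤ c) (hcH : ∀ i ∉ H, c i = 0) : ¬ Spans f c := by
  rw [hf.spans_iff hc]
  intro h
  have hle := h H
  rw [sum_eq_zero fun i hi => hcH i (mem_compl.1 hi)] at hle
  have := (mem_hyperplanes.1 hH).2
  lia

/-- If `I` violates Edmonds' condition for `c`, then `I` contains `T`, so it has
corank one and `c` vanishes outside `I`. -/
lemma exists_hyperplane_eq_zero_off_of_not_spans (hf : IsPolymatroidRank n f) (hc : 0 ≤ c)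
    {T : Finset (Fin n)} (hcT : ∀ i ∈ T, (f univ : ℤ) < c i) (hT : f univ ≤ f T + 1)
    (hspans : ¬ Spans f c) : ∃ H ∈ hyperplanes n f, ∀ i ∉ H, c i = 0 := by
  rw [hf.spans_iff hc] at hspans
  push Not at hspans
  obtain ⟨I, hI⟩ := hspans
  have hle : ∀ i ∉ I, c i ≤ ∑ i ∈ Iᶜ, c i := fun i hi =>
    single_le_sum (fun j _ => hc j) (mem_compl.2 hi)
  have hTI : T ⊆ I := by
    intro i hiT
    by_contra hiI
    have hsum := hle i hiI
    have := hcT i hiT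
    lia
  have hmono := hf.mono hTI
  have hsum : 0 ≤ ∑ i ∈ Iᶜ, c i := sum_nonneg fun i _ => hc i
  obtain ⟨H, hH, hIH⟩ := hf.exists_hyperplane_superset (I := I) (by lia)
  refine ⟨H, hH, fun i hiH => le_antisymm ?_ (hc i)⟩
  have := hle i fun hiI => hiH (hIH hiI)
  lia

lemma card_hyperplanes_eq_zero_off (hf : IsPolymatroidRank n f) (hc : 0 ≤ c)
    {T : Finset (Fin n)} (hcT : ∀ i ∈ T, (f univ : ℤ) < c i)
    (hT : f univ ≤ f T + 1) [Decidable (Spans f c)] :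
    #{H ∈ hyperplanes n f | ∀ i ∉ H, c i = 0} = if Spans f c then 0 else 1 := by
  split_ifs with hspans
  · rw [card_eq_zero, filter_eq_empty_iff]
    exact fun H hH hcH => hf.not_spans_of_eq_zero_off_hyperplane hH hc hcH hspans
  · obtain ⟨H, hH, hcH⟩ := hf.exists_hyperplane_eq_zero_off_of_not_spans hc hcT hT hspans
    have hTsub : ∀ K : Finset (Fin n), (∀ i ∉ K, c i = 0) → T ⊆ K := fun K hcK i hiT => by
      by_contra hiK
      exact ((Nat.cast_nonneg _).trans_lt (hcT i hiT)).ne' (hcK i hiK)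
    have hrank : ∀ K : Finset (Fin n), (∀ i ∉ K, c i = 0) → f univ ≤ f (H ∩ K) + 1 :=
      fun K hcK => hT.trans (Nat.add_le_add_right
        (hf.mono (subset_inter (hTsub H hcH) (hTsub K hcK))) 1)
    refine card_eq_one.2 ⟨H, eq_singleton_iff_unique_mem.2 ⟨mem_filter.2 ⟨hH, hcH⟩, ?_⟩⟩
    intro K hK
    obtain ⟨hK, hcK⟩ := mem_filter.1 hK
    have hinter := hrank K hcK
    exact (hf.hyperplane_subset hH hK hinter).antisymm
      (hf.hyperplane_subset hK hH (inter_comm H K ▸ hinter))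

end IsPolymatroidRank

end Hyperplanes

section Coefficients

variable {n : ℕ} {f : Finset (Fin n) → ℕ} {D : ℤ}

lemma rk_le_card_compl {k : ℕ} {T : Finset (Fin n)} (hT : f T + k ≤ f univ) :
    rk n f k ≤ #Tᶜ := by
  refine Nat.sInf_le ⟨T, by lia, ?_⟩
  rw [card_compl, Fintype.card_fin]

lemma sum_hyperplanes_X_pow (hD : 0 < D) : ∑ H ∈ hyperplanes n f, (X : ℤ[X]) ^ #Hᶜ =
    ∑ c ∈ truncCone D 0 univ,
      boxWeight X D c * (#{H ∈ hyperplanes n f | ∀ i ∉ H, c i = 0} : ℤ[X]) := by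
  have hcone : ∀ H : Finset (Fin n), (X : ℤ[X]) ^ #Hᶜ =
      ∑ c ∈ truncCone D 0 univ, if ∀ i ∉ H, c i = 0 then boxWeight X D c else 0 := by
    intro H
    rw [← sum_filter, filter_eq_zero_off_eq_truncCone hD.le,
      sum_boxWeight_truncCone X le_rfl fun _ => hD]
    simp
  rw [sum_congr rfl fun H _ => hcone H, sum_comm]
  refine sum_congr rfl fun c _ => ?_
  rw [← sum_filter, sum_const, nsmul_eq_mul, mul_comm]

namespace IsPolymatroidRank

open scoped Classical in
lemma one_sub_X_pow_mul_exteriorPoly_sub (hf : IsPolymatroidRank n f) (hD : (f univ : ℤ) < D) :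
    (1 - X) ^ f univ * exteriorPoly n f - (1 - ∑ H ∈ hyperplanes n f, X ^ #Hᶜ) =
      ∑ c ∈ truncCone D 0 univ, boxWeight X D c * ((if Spans f c then 1 else 0) - 1 +
        (#{H ∈ hyperplanes n f | ∀ i ∉ H, c i = 0} : ℤ[X])) := by
  have hD₀ : 0 < D := (Nat.cast_nonneg _).trans_lt hD
  have hone : ∑ c ∈ truncCone D (0 : Fin n → ℤ) univ, boxWeight (X : ℤ[X]) D c = 1 := by
    rw [sum_boxWeight_truncCone X le_rfl fun _ => hD₀]
    simp
  rw [hf.one_sub_X_pow_mul_exteriorPoly hD, sum_filter, sum_hyperplanes_X_pow hD₀]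
  simp only [mul_add, mul_sub, mul_boole, mul_one, sum_add_distrib, sum_sub_distrib]
  rw [hone]
  ring

/-- Let `T` be the set of coordinates where `c` reaches the cut-off `D`. If `T` has corank at least
`2`, then already the weight of `c` is divisible; otherwise the second factor vanishes. -/
lemma X_pow_rk_two_dvd_boxWeight_mul (hf : IsPolymatroidRank n f) (hD : (f univ : ℤ) < D)
    {c : Fin n → ℤ} (hc : 0 ≤ c) [Decidable (Spans f c)] :
    X ^ rk n f 2 ∣ boxWeight X D c * ((if Spans f c then 1 else 0) - 1 +
      (#{H ∈ hyperplanes n f | ∀ i ∉ H, c i = 0} : ℤ[X])) := by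
  let T : Finset (Fin n) := {i | c i = D}
  by_cases hT : f univ ≤ f T + 1
  · have hcT : ∀ i ∈ T, (f univ : ℤ) < c i := fun i hi => by
      rwa [(mem_filter_univ i).1 hi]
    rw [hf.card_hyperplanes_eq_zero_off hc hcT hT]
    split_ifs <;> simp
  · have hrk : rk n f 2 ≤ #Tᶜ := rk_le_card_compl (by lia)
    exact ((pow_dvd_pow X hrk).trans (pow_card_ne_dvd_boxWeight X D c)).mul_right _

lemma X_pow_rk_two_dvd (hf : IsPolymatroidRank n f) :
    X ^ rk n f 2 ∣ (1 - X) ^ f univ * exteriorPoly n f -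
      (1 - ∑ H ∈ hyperplanes n f, X ^ #Hᶜ) := by
  classical
  rw [hf.one_sub_X_pow_mul_exteriorPoly_sub (lt_add_one (f univ : ℤ))]
  exact dvd_sum fun c hc => hf.X_pow_rk_two_dvd_boxWeight_mul (lt_add_one _)
    (le_of_mem_truncCone hc)

lemma coeff_one_sub_X_pow_mul_exteriorPoly (hf : IsPolymatroidRank n f) {j : ℕ}
    (hj : j < rk n f 2) : ((1 - X) ^ f univ * exteriorPoly n f).coeff j =
      (if j = 0 then 1 else 0) - (#(Hset n f j) : ℤ) := by
  have hcoeff := X_pow_dvd_iff.1 hf.X_pow_rk_two_dvd j hj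
  rw [coeff_sub, sub_eq_zero] at hcoeff
  rw [hcoeff, coeff_sub, coeff_one, finsetSum_coeff, Hset_eq_filter_hyperplanes]
  simp only [coeff_X_pow, sum_boole, card_compl, Fintype.card_fin, eq_comm]

lemma succ_mul_coeff_exteriorPoly_sub_le (hf : IsPolymatroidRank n f) (hrank : 2 ≤ f univ) {i : ℕ}
    (hi : i + 2 < rk n f 2) :
    (i + 2 : ℤ) * ((exteriorPoly n f).coeff (i + 2) - (exteriorPoly n f).coeff (i + 1)) ≤
      (f univ + i : ℤ) * ((exteriorPoly n f).coeff (i + 1) - (exteriorPoly n f).coeff i) := by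
  obtain ⟨m, hm⟩ := Nat.exists_eq_add_of_le' hrank
  have hnonpos : ∀ j ≤ i + 1,
      ((1 - X) ^ (m + 1) * ((1 - X) * exteriorPoly n f)).coeff (j + 1) ≤ 0 := by
    intro j hj
    rw [← mul_assoc, ← pow_succ, ← hm, hf.coeff_one_sub_X_pow_mul_exteriorPoly (by lia)]
    simp
  have := succ_mul_coeff_succ_le hnonpos
  rw [coeff_one_sub_X_mul_succ, coeff_one_sub_X_mul_succ] at this
  rw [hm]
  push_cast at this ⊢
  linarith

end IsPolymatroidRank

end Coefficients

/-- If `f([n]) ≥ 2` then for every `1 ≤ i < r_2(P) - 1`,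
`[y^{i+1}]X_P - [y^i]X_P ≤ ((f([n])+i-1)/(i+1)) * ([y^i]X_P - [y^{i-1}]X_P)`;
in particular if `[y^i]X_P - [y^{i-1}]X_P ≤ 0` then `[y^{i+1}]X_P - [y^i]X_P ≤ 0`. -/
theorem stmt18 (n : ℕ) (f : Finset (Fin n) → ℕ) (hf : IsPolymatroidRank n f)
    (hrank : 2 ≤ f Finset.univ) (i : ℕ) (h1 : 1 ≤ i) (hi : i < rk n f 2 - 1) :
    (((exteriorPoly n f).coeff (i + 1) : ℚ) - ((exteriorPoly n f).coeff i : ℚ) ≤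
      (((f Finset.univ + i - 1 : ℕ) : ℚ) / ((i + 1 : ℕ) : ℚ)) *
        (((exteriorPoly n f).coeff i : ℚ) - ((exteriorPoly n f).coeff (i - 1) : ℚ))) ∧
    ((exteriorPoly n f).coeff i - (exteriorPoly n f).coeff (i - 1) ≤ 0 →
      (exteriorPoly n f).coeff (i + 1) - (exteriorPoly n f).coeff i ≤ 0) := by
  obtain ⟨i, rfl⟩ := Nat.exists_eq_add_of_le' h1
  have key := hf.succ_mul_coeff_exteriorPoly_sub_le hrank (i := i) (by lia)
  have hfactor : f univ + (i + 1) - 1 = f univ + i := rfl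
  rw [add_tsub_cancel_right, hfactor]
  constructor
  · rw [div_mul_eq_mul_div, le_div_iff₀ (by positivity), mul_comm]
    exact_mod_cast key
  · intro h
    have hpos : (0 : ℤ) < i + 2 := by positivity
    exact nonpos_of_mul_nonpos_right
      (key.trans (mul_nonpos_of_nonneg_of_nonpos (by positivity) h)) hpos
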